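/- For every f ∈ C(S¹), the 'pizza slice' sums converge uniformly on the closed unit disc to the cone extension of f: sup_{z∈D} | Σ_{j=1}^{k} f(δ_{j,k}^{(0)}) · χ́_{j,k}(z) − g_f(z) | → 0 as k → ∞. -/

import Mathlib

/-!
Every nonzero `z` in the disc is `‖z‖ · exp(2πit)` for exactly one `t` in the half-open interval
`(1/(2k), 1 + 1/(2k)]` of length one, which the intervals `((2j−1)/(2k), (2j+1)/(2k)]`,
`1 ≤ j ≤ k`, partition. So `z` lies in exactly one slice (`exists_polar_angle_mem_slice`,
`pizzaSlice_index_unique`), and the sum collapses to `f(δ_j) · ‖z‖` for that slice's index `j`.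
The error is therefore at most `‖F(2πj/k) − F(2πt)‖` with `F = f ∘ Circle.exp` and
`|j/k − t| ≤ 1/(2k)`. As `f` is uniformly continuous on the compact circle and `Circle.exp`
is 1-Lipschitz, `F` is uniformly continuous, so this is small for large `k`, uniformly in `z`.
-/

/-!
For every `f ∈ C(S¹)`, the 'pizza slice' sums converge uniformly on the closed unit disc `D`
to the cone extension of `f`:
`sup_{z ∈ D} |Σ_{j=1}^{k} f(δ_{j,k}^{(0)}) · χ́_{j,k}(z) − g_f(z)| → 0` as `k → ∞`.
-/

open Filter

noncomputable section

/-- The point `δ_{j,k}^{(l)} = exp(2πi(2j+l)/(2k))` on the unit circle. -/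
def sawtoothPoint (k j l : ℕ) : Circle :=
  Circle.exp (2 * Real.pi * ((2 * j + l) / (2 * k)))

/-- The sawtooth function `ē_{j,k}^{(l)}` on the circle:
`ē_{j,k}^{(l)}(e^{2πit}) = max (0, 1 − 2k · dist_{ℝ/ℤ}(t, (2j+l)/(2k)))`,
where the distance is taken in `ℝ/ℤ`. -/
def sawtooth (k j l : ℕ) (z : Circle) : ℝ :=
  max 0 (1 - 2 * k *
    dist ((AddCircle.homeomorphCircle one_ne_zero).symm z)
      (((2 * j + l) / (2 * k) : ℝ) : AddCircle (1 : ℝ)))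
open Complex in
/-- The `pizza slice` `S_{j,k} = {r e^{2πit} : (2j−1)/(2k) < t ≤ (2j+1)/(2k), 0 < r ≤ 1}`
inside the closed unit disc. -/
def pizzaSlice (k j : ℕ) : Set ℂ :=
  {z | ∃ r t : ℝ, 0 < r ∧ r ≤ 1 ∧
    (2 * (j : ℝ) - 1) / (2 * k) < t ∧ t ≤ (2 * (j : ℝ) + 1) / (2 * k) ∧
    z = r * Complex.exp (2 * Real.pi * t * Complex.I)}

/-- The function `χ́_{j,k} : D → ℂ`, equal to `|z|` on the pizza slice `S_{j,k}` and `0`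
elsewhere. -/
def pizzaFun (k j : ℕ) : ℂ → ℂ :=
  (pizzaSlice k j).indicator fun z => (‖z‖ : ℂ)

/-- The cone extension `g_f : D → ℂ`, `g_f(z) = |z| · f(z/|z|)` for `z ≠ 0` and `g_f(0) = 0`,
of a function `f` on the circle. -/
def coneExtend (f : Circle → ℂ) : ℂ → ℂ := fun z =>
  if h : z = 0 then 0
  else (‖z‖ : ℂ) * f ⟨‖z‖⁻¹ • z, mem_sphere_zero_iff_norm.mpr (by
    rw [norm_smul]
    simp [norm_inv]
    exact inv_mul_cancel₀ (norm_ne_zero_iff.mpr h))⟩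

/-- Existence of the slice: the index `j` and the angle `t` are given separately from membership in
`pizzaSlice`, since `t` is needed to compare with `coneExtend`. -/
theorem exists_polar_angle_mem_slice {k : ℕ} (hk : 0 < k) (z : ℂ) :
    ∃ (j : ℕ) (t : ℝ), j ∈ Finset.Icc 1 k ∧
      (2 * (j : ℝ) - 1) / (2 * k) < t ∧ t ≤ (2 * (j : ℝ) + 1) / (2 * k) ∧
      z = (‖z‖ : ℝ) * Complex.exp (2 * Real.pi * t * Complex.I) := by
  have hk' : (0 : ℝ) < k := by exact_mod_cast hk
  -- `t` is the angle of `z`, in turns, reduced modulo 1 into `(1/(2k), 1 + 1/(2k)]`.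
  set t₀ : ℝ := z.arg / (2 * Real.pi) with ht₀
  set t : ℝ := toIocMod one_pos (1 / (2 * k) : ℝ) t₀ with ht
  obtain ⟨hl, hu⟩ := toIocMod_mem_Ioc (one_pos : (0 : ℝ) < 1) (1 / (2 * k) : ℝ) t₀
  rw [← ht] at hl hu
  obtain ⟨n, hn⟩ : ∃ n : ℤ, t = t₀ - n :=
    ⟨toIocDiv one_pos (1 / (2 * k) : ℝ) t₀, by rw [ht, toIocMod]; simp⟩
  have h1 : 1 < 2 * k * t := by
    rw [div_lt_iff₀ (by positivity)] at hl; linarith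
  have h2 : 2 * k * t ≤ 2 * k + 1 := by
    have : 1 / (2 * (k : ℝ)) * (2 * k) = 1 := by field_simp
    nlinarith
  have hc1 := Nat.ceil_lt_add_one (a := k * t - 1 / 2) (by linarith)
  have hc2 := Nat.le_ceil (k * t - 1 / 2)
  -- The slice condition on `j` reads `j - 1 < k t - 1/2 ≤ j`, so `j` is a ceiling.
  refine ⟨⌈k * t - 1 / 2⌉₊, t, ?_, ?_, ?_, ?_⟩
  · rw [Finset.mem_Icc]
    exact ⟨Nat.ceil_pos.2 (by linarith), Nat.ceil_le.2 (by linarith)⟩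
  · rw [div_lt_iff₀ (by positivity)]; linarith
  · rw [le_div_iff₀ (by positivity)]; linarith
  · have he : (2 * Real.pi * t * Complex.I : ℂ)
        = z.arg * Complex.I - n * (2 * Real.pi * Complex.I) := by
      rw [hn, ht₀]
      push_cast
      have : (Real.pi : ℂ) ≠ 0 := by exact_mod_cast Real.pi_ne_zero
      field_simp
    rw [he, Complex.exp_sub, Complex.exp_int_mul_two_pi_mul_I, div_one,
      Complex.norm_mul_exp_arg_mul_I]

/-- Slices with distinct indices in `1, …, k` are disjoint: two angles of the same point differ by
an integer `n`, and both lie in a half-open interval of length one, so `n = 0`. -/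
theorem pizzaSlice_index_unique {k i j : ℕ} (hi : i ∈ Finset.Icc 1 k) (hj : j ∈ Finset.Icc 1 k)
    {z : ℂ} (hzi : z ∈ pizzaSlice k i) (hzj : z ∈ pizzaSlice k j) : i = j := by
  rw [Finset.mem_Icc] at hi hj
  have hk : 0 < k := by omega
  have hk' : (0 : ℝ) < k := by exact_mod_cast hk
  obtain ⟨r, t, hr, -, h1, h2, hz⟩ := hzi
  obtain ⟨s, u, hs, -, h3, h4, hw⟩ := hzj
  have key : ∀ {r t : ℝ}, 0 < r →
      ‖(r * Complex.exp (2 * Real.pi * t * Complex.I) : ℂ)‖ = r := by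
    intro r t hr
    have : (2 * Real.pi * t * Complex.I : ℂ) = ((2 * Real.pi * t : ℝ) : ℂ) * Complex.I := by
      push_cast; ring
    rw [norm_mul, this, Complex.norm_exp_ofReal_mul_I, mul_one, Complex.norm_real,
      Real.norm_of_nonneg hr.le]
  have hrs : r = s := by rw [← key (t := t) hr, ← key (t := u) hs, ← hz, ← hw]
  subst hrs
  rw [hz] at hw
  have hr' : (r : ℂ) ≠ 0 := by exact_mod_cast hr.ne'
  obtain ⟨n, hn⟩ := Complex.exp_eq_exp_iff_exists_int.1 (mul_left_cancel₀ hr' hw)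
  have hp : (2 * Real.pi * Complex.I : ℂ) ≠ 0 := Complex.two_pi_I_ne_zero
  have htu : t = u + n := by
    have : (t : ℂ) = u + n := by
      apply mul_left_cancel₀ hp
      linear_combination hn
    exact_mod_cast this
  rw [div_lt_iff₀ (by positivity)] at h1 h3
  rw [le_div_iff₀ (by positivity)] at h2 h4
  have a1 : (1 : ℝ) ≤ i := by exact_mod_cast hi.1
  have a2 : (i : ℝ) ≤ k := by exact_mod_cast hi.2
  have a3 : (1 : ℝ) ≤ j := by exact_mod_cast hj.1
  have a4 : (j : ℝ) ≤ k := by exact_mod_cast hj.2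
  have hn0 : n = 0 := by
    have b1 : (n : ℝ) < 1 := by
      by_contra! h; nlinarith
    have b2 : (-1 : ℝ) < n := by
      by_contra! h; nlinarith
    have b1' : n < 1 := by exact_mod_cast b1
    have b2' : -1 < n := by exact_mod_cast b2
    omega
  subst hn0
  simp only [Int.cast_zero, add_zero] at htu
  subst htu
  have c1 : (i : ℝ) < j + 1 := by linarith
  have c2 : (j : ℝ) < i + 1 := by linarith
  have c1' : i < j + 1 := by exact_mod_cast c1
  have c2' : j < i + 1 := by exact_mod_cast c2
  omega

theorem coneExtend_eq (f : Circle → ℂ) {z : ℂ} (hz : z ≠ 0) {t : ℝ}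
    (h : z = (‖z‖ : ℝ) * Complex.exp (2 * Real.pi * t * Complex.I)) :
    coneExtend f z = ‖z‖ * f (Circle.exp (2 * Real.pi * t)) := by
  rw [coneExtend, dif_neg hz]
  congr 2
  apply Circle.ext
  have hz' : (‖z‖ : ℂ) ≠ 0 := by exact_mod_cast norm_ne_zero_iff.2 hz
  change ‖z‖⁻¹ • z = _
  rw [Circle.coe_exp, Complex.real_smul]
  push_cast
  rw [inv_mul_eq_iff_eq_mul₀ hz']
  exact h

theorem uniformContinuous_comp_circleExp (f : C(Circle, ℂ)) :
    UniformContinuous fun x : ℝ => f (Circle.exp x) := by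
  refine (CompactSpace.uniformContinuous_of_continuous f.continuous).comp ?_
  refine (LipschitzWith.of_dist_le_mul (K := 1) fun x y => ?_).uniformContinuous
  rw [NNReal.coe_one, one_mul]
  change dist (Circle.exp x : ℂ) (Circle.exp y) ≤ dist x y
  rw [dist_eq_norm, Circle.coe_exp, Circle.coe_exp, Real.dist_eq]
  have h := Real.norm_exp_I_mul_ofReal_sub_one_le (x := x - y)
  have he : Complex.exp (x * Complex.I) - Complex.exp (y * Complex.I)
      = Complex.exp (y * Complex.I) * (Complex.exp (Complex.I * (x - y : ℝ)) - 1) := by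
    rw [mul_sub, ← Complex.exp_add, mul_one]
    congr 2
    push_cast
    ring
  rw [he, norm_mul, Complex.norm_exp_ofReal_mul_I, one_mul]
  exact h

/-- **The pizza-slice sums converge uniformly on the closed unit disc to the cone extension.** -/
theorem tendsto_pizza_approximation (f : C(Circle, ℂ)) :
    Tendsto (fun k : ℕ =>
        ⨆ z : Metric.closedBall (0 : ℂ) 1,
          ‖(∑ j ∈ Finset.Icc 1 k, f (sawtoothPoint k j 0) * pizzaFun k j z) -
            coneExtend f z‖)
      atTop (nhds 0) := by
  rw [Metric.tendsto_atTop]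
  intro ε hε
  obtain ⟨δ, hδ, hF⟩ :=
    Metric.uniformContinuous_iff.1 (uniformContinuous_comp_circleExp f) (ε / 2) (by positivity)
  -- Each slice has angular half-width `π / k`, which has to be below `δ`.
  obtain ⟨N, hN⟩ := exists_nat_gt (Real.pi / δ)
  refine ⟨N + 1, fun k hk => ?_⟩
  have hk0 : 0 < k := by omega
  have hk' : (0 : ℝ) < k := by exact_mod_cast hk0
  have hkδ : Real.pi < k * δ := by
    have : (N : ℝ) ≤ k := by exact_mod_cast (by omega : N ≤ k)
    exact (div_lt_iff₀ hδ).1 (hN.trans_le this)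
  rw [dist_zero_right, Real.norm_of_nonneg (Real.iSup_nonneg fun _ => norm_nonneg _)]
  refine (Real.iSup_le (fun z => ?_) (by positivity : 0 ≤ ε / 2)).trans_lt (by linarith)
  obtain ⟨z, hz1⟩ := z
  rw [mem_closedBall_zero_iff] at hz1
  by_cases hz : z = 0
  · subst hz
    have h0 : ∀ i, pizzaFun k i 0 = 0 := fun i =>
      Set.indicator_apply_eq_zero.2 fun _ => by simp
    simp only [h0, coneExtend, mul_zero, Finset.sum_const_zero, dite_true, sub_zero, norm_zero]
    positivity
  obtain ⟨j, t, hj, h1, h2, hzt⟩ := exists_polar_angle_mem_slice hk0 z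
  have hmem : z ∈ pizzaSlice k j := ⟨‖z‖, t, norm_pos_iff.2 hz, hz1, h1, h2, hzt⟩
  rw [Finset.sum_eq_single_of_mem j hj, pizzaFun, Set.indicator_of_mem hmem,
    coneExtend_eq f hz hzt]
  · rw [mul_comm, ← mul_sub, norm_mul, Complex.norm_real, norm_norm]
    have hd : dist (2 * Real.pi * ((2 * j + (0 : ℕ)) / (2 * k))) (2 * Real.pi * t) < δ := by
      rw [Real.dist_eq, ← mul_sub, abs_mul, abs_of_pos Real.two_pi_pos]
      have hb : |(2 * j + (0 : ℕ)) / (2 * k) - t| ≤ 1 / (2 * k) := by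
        rw [sub_div] at h1
        rw [add_div] at h2
        rw [Nat.cast_zero, add_zero, abs_le]
        constructor <;> linarith
      calc 2 * Real.pi * |(2 * j + (0 : ℕ)) / (2 * k) - t|
          ≤ 2 * Real.pi * (1 / (2 * k)) := by gcongr
        _ = Real.pi / k := by field_simp
        _ < δ := by rw [div_lt_iff₀ hk']; linarith
    have hlt := hF hd
    rw [dist_eq_norm] at hlt
    calc _ ≤ 1 * (ε / 2) := mul_le_mul hz1 hlt.le (norm_nonneg _) zero_le_one
      _ = ε / 2 := one_mul _
  · intro i hi hij
    rw [pizzaFun, Set.indicator_of_notMem, mul_zero]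
    exact fun h => hij (pizzaSlice_index_unique hi hj h hmem)

end
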